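/- Fix d ≥ 2, a horizon T ≥ 1, and sequences p_1,…,p_T ∈ Δ(d) and ℓ_1,…,ℓ_T ∈ [0,1]^d, and define Reg(φ) = Σ_{t=1}^T ⟨p_t − φ^T p_t, ℓ_t⟩ for φ ∈ S. Suppose there are constants C, B ≥ 0 such that Reg(φ) ≤ C·√(T·log(1/π(φ))) + B for every φ ∈ Φ_b. Then for every row-stochastic φ ∈ S, Reg(φ) ≤ C·√(T·(2 c_φ log d + 2)) + B. -/

import Mathlib

/-!
Write `ψ^g = ((d-2)/(d-1))·g + (1/(d(d-1)))·1 1^T` for a map `g : [d] → [d]`, so that `ψ^k` and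
`ψ^{d+1}` are the cases of `g` constant and `g = id`. A binary matrix `f` has weight
`π_{ψ^g}(f) = (1 - 1/d)^(d-h) (1/(d(d-1)))^h` with `h` the Hamming distance of `f` and `g`, and
`c_f` is the least such distance over these `d + 1` maps `g`, where a constant map counts `1` more
to pay for its factor `1/d` in the prior. Since `(1 - 1/d)^d ≥ 8/27 ≥ 2 e⁻²` for `d ≥ 3`, this gives
`π(f) ≥ e⁻² d^(-2 c_f)`; for `d = 2` the prior is uniform, with value `1/4 ≥ e⁻²`.

So the claimed bound holds at binary matrices. The regret is affine in `φ`, the bound is concave in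
`c_φ`, and `c_φ` is the mean of `c_f` over a minimizing distribution with mean matrix `φ`: Jensen's
inequality extends the bound to all row-stochastic matrices.
-/

open Finset

/-- The binary row-stochastic matrix associated with a map `f : [d] → [d]`. -/
def toMat (d : ℕ) (f : Fin d → Fin d) : Matrix (Fin d) (Fin d) ℝ :=
  fun i j => if f i = j then 1 else 0

/-- The set `Φ_b` of binary row-stochastic `d × d` matrices. -/
noncomputable def PhiB (d : ℕ) : Finset (Matrix (Fin d) (Fin d) ℝ) := by
  classical exact Finset.image (toMat d) Finset.univ

/-- A matrix is row-stochastic if every row lies in the simplex. -/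
def RowStochastic {d : ℕ} (φ : Matrix (Fin d) (Fin d) ℝ) : Prop :=
  ∀ i, (∀ j, 0 ≤ φ i j) ∧ ∑ j, φ i j = 1

/-- A vector lies in the probability simplex `Δ(d)`. -/
def InSimplex (d : ℕ) (p : Fin d → ℝ) : Prop :=
  (∀ i, 0 ≤ p i) ∧ ∑ i, p i = 1

/-- The `ψ`-induced weight of `φ`: `π_ψ(φ) = ∏ i ⟨ψ_{i:}, φ_{i:}⟩`. -/
noncomputable def piInd {d : ℕ} (ψ φ : Matrix (Fin d) (Fin d) ℝ) : ℝ :=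
  ∏ i, ∑ j, ψ i j * φ i j

/-- `ψ^k = ((d-2)/(d-1))·1 e_k^T + (1/(d(d-1)))·1 1^T`. -/
noncomputable def psiK (d : ℕ) (k : Fin d) : Matrix (Fin d) (Fin d) ℝ :=
  fun _ j => ((d : ℝ) - 2) / ((d : ℝ) - 1) * (if j = k then 1 else 0) + 1 / ((d : ℝ) * ((d : ℝ) - 1))

/-- `ψ^{d+1} = ((d-2)/(d-1))·I + (1/(d(d-1)))·1 1^T`. -/
noncomputable def psiSelf (d : ℕ) : Matrix (Fin d) (Fin d) ℝ :=
  fun i j => ((d : ℝ) - 2) / ((d : ℝ) - 1) * (if i = j then 1 else 0) + 1 / ((d : ℝ) * ((d : ℝ) - 1))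

/-- The special prior `π = (1/(2d)) Σ_k π_{ψ^k} + (1/2) π_{ψ^{d+1}}`. -/
noncomputable def priorPi (d : ℕ) (φ : Matrix (Fin d) (Fin d) ℝ) : ℝ :=
  1 / (2 * d) * ∑ k : Fin d, piInd (psiK d k) φ + 1 / 2 * piInd (psiSelf d) φ

/-- `d^self_φ`: the number of indices `i` whose row equals `e_i^T`. -/
noncomputable def dSelf {d : ℕ} (φ : Matrix (Fin d) (Fin d) ℝ) : ℕ :=
  Nat.card {i : Fin d // φ i = fun j => if j = i then (1 : ℝ) else 0}

/-- `d^unif_φ`: the maximum multiplicity in the multiset of rows of `φ`. -/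
noncomputable def dUnif {d : ℕ} (φ : Matrix (Fin d) (Fin d) ℝ) : ℕ :=
  Finset.univ.sup fun i : Fin d => Nat.card {j : Fin d // φ j = φ i}

/-- Complexity measure for binary row-stochastic matrices. -/
noncomputable def cB {d : ℕ} (φ : Matrix (Fin d) (Fin d) ℝ) : ℕ :=
  min (d - dSelf φ) (d - dUnif φ + 1)

/-- `Q_φ`: distributions over `Φ_b` (indexed by maps `f : [d] → [d]`) averaging to `φ`. -/
def QSet (d : ℕ) (φ : Matrix (Fin d) (Fin d) ℝ) : Set ((Fin d → Fin d) → ℝ) :=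
  {q | (∀ f, 0 ≤ q f) ∧ (∑ f, q f = 1) ∧ ∀ i j, ∑ f, q f * toMat d f i j = φ i j}

/-- Extended complexity measure `c_φ = inf_{q ∈ Q_φ} E_{φ'∼q}[c_{φ'}]`. -/
noncomputable def cGen (d : ℕ) (φ : Matrix (Fin d) (Fin d) ℝ) : ℝ :=
  sInf ((fun q => ∑ f : Fin d → Fin d, q f * (cB (toMat d f) : ℝ)) '' QSet d φ)

/-- Matrix inner product `⟨φ, p ℓ^T⟩`. -/
noncomputable def lossInner {d : ℕ} (φ : Matrix (Fin d) (Fin d) ℝ) (p ℓ : Fin d → ℝ) : ℝ :=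
  ∑ i, ∑ j, φ i j * (p i * ℓ j)

/-- The mean matrix `E_{f∼q}[φ_f]` of a weight vector over binary matrices. -/
noncomputable def mixMat (d : ℕ) (q : (Fin d → Fin d) → ℝ) : Matrix (Fin d) (Fin d) ℝ :=
  fun i j => ∑ f, q f * toMat d f i j

/-- KL divergence of `q` (a distribution over `Φ_b`, indexed by maps) from the prior `π`. -/
noncomputable def klPrior (d : ℕ) (q : (Fin d → Fin d) → ℝ) : ℝ :=
  ∑ f, q f * Real.log (q f / priorPi d (toMat d f))

/-- The kernel `K(B,A) = Σ_{φ∈Φ_b} π(φ) Π_{i,j : φ_{ij}=1} B_{ij} A_{ij}`. -/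
noncomputable def kernelK (d : ℕ) (B A : Matrix (Fin d) (Fin d) ℝ) : ℝ := by
  classical exact
    ∑ φ ∈ PhiB d, priorPi d φ * ∏ i, ∏ j, if φ i j = 1 then B i j * A i j else 1

variable {d : ℕ}

theorem sum_prod_mul_apply {ι κ R : Type*} [Fintype ι] [DecidableEq ι] [Fintype κ] [CommSemiring R]
    {p : ι → κ → R} (hp : ∀ i, ∑ x, p i x = 1) (i : ι) (F : κ → R) :
    ∑ f : ι → κ, (∏ k, p k (f k)) * F (f i) = ∑ x, p i x * F x := by
  have hfactor (f : ι → κ) : (∏ k, p k (f k)) * F (f i) =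
      ∏ k, p k (f k) * (if k = i then F (f k) else 1) := by
    rw [prod_mul_distrib, prod_ite_eq' univ i, if_pos (mem_univ i)]
  simp only [hfactor]
  rw [← Fintype.prod_sum fun k x => p k x * (if k = i then F x else 1),
    Fintype.prod_eq_single i fun k hk => by simp only [if_neg hk, mul_one, hp]]
  simp only [if_true]

theorem toMat_mem_rowStochastic (f : Fin d → Fin d) :
    toMat d f ∈ Matrix.rowStochastic ℝ (Fin d) := by
  refine Matrix.mem_rowStochastic_iff_sum.2 ⟨fun i j => ?_, fun i => ?_⟩
  · unfold toMat
    split_ifs <;> norm_num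
  · simp [toMat]

theorem mixMat_eq_sum_smul (q : (Fin d → Fin d) → ℝ) : mixMat d q = ∑ f, q f • toMat d f := by
  ext i j
  simp [mixMat, Matrix.sum_apply]

theorem QSet_eq_inter (φ : Matrix (Fin d) (Fin d) ℝ) :
    QSet d φ = stdSimplex ℝ (Fin d → Fin d) ∩ {q | mixMat d q = φ} := by
  ext q
  simp [QSet, stdSimplex, mixMat, ← Matrix.ext_iff, and_assoc]

theorem isCompact_QSet (φ : Matrix (Fin d) (Fin d) ℝ) : IsCompact (QSet d φ) := by
  have hcont : Continuous (mixMat d) := by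
    unfold mixMat
    fun_prop
  rw [QSet_eq_inter]
  exact (isCompact_stdSimplex ℝ _).inter_right (isClosed_eq hcont continuous_const)

theorem QSet_nonempty {φ : Matrix (Fin d) (Fin d) ℝ} (hφ : RowStochastic φ) :
    (QSet d φ).Nonempty := by
  -- Draw the rows independently.
  refine ⟨fun f => ∏ i, φ i (f i), fun f => prod_nonneg fun i _ => (hφ i).1 _, ?_, fun i j => ?_⟩
  · rw [← Fintype.prod_sum fun i j => φ i j]
    exact prod_eq_one fun i _ => (hφ i).2
  · have hmarginal := sum_prod_mul_apply (fun k => (hφ k).2) i fun x => if x = j then (1 : ℝ) else 0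
    simpa [toMat] using hmarginal

theorem exists_mem_QSet_cGen_eq {φ : Matrix (Fin d) (Fin d) ℝ} (hφ : RowStochastic φ) :
    ∃ q ∈ QSet d φ, cGen d φ = ∑ f, q f * (cB (toMat d f) : ℝ) :=
  (isCompact_QSet φ).exists_sInf_image_eq (QSet_nonempty hφ) (by fun_prop)

theorem map_le_map_cGen {R : Matrix (Fin d) (Fin d) ℝ → ℝ} {g : ℝ → ℝ}
    (hR : ConvexOn ℝ (Matrix.rowStochastic ℝ (Fin d)) R) (hg : ConcaveOn ℝ (Set.Ici 0) g)
    (hRg : ∀ f, R (toMat d f) ≤ g (cB (toMat d f)))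
    {φ : Matrix (Fin d) (Fin d) ℝ} (hφ : RowStochastic φ) : R φ ≤ g (cGen d φ) := by
  obtain ⟨q, hq, hc⟩ := exists_mem_QSet_cGen_eq hφ
  obtain ⟨⟨hq_nonneg, hq_sum⟩, rfl⟩ := (QSet_eq_inter φ).subset hq
  calc R (mixMat d q)
      = R (∑ f, q f • toMat d f) := by rw [mixMat_eq_sum_smul]
    _ ≤ ∑ f, q f • R (toMat d f) :=
        hR.map_sum_le (fun f _ => hq_nonneg f) hq_sum fun f _ => toMat_mem_rowStochastic f
    _ ≤ ∑ f, q f • g (cB (toMat d f)) :=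
        sum_le_sum fun f _ => mul_le_mul_of_nonneg_left (hRg f) (hq_nonneg f)
    _ ≤ g (∑ f, q f • (cB (toMat d f) : ℝ)) :=
        hg.le_map_sum (fun f _ => hq_nonneg f) hq_sum fun f _ => Set.mem_Ici.2 (Nat.cast_nonneg _)
    _ = g (cGen d (mixMat d q)) := by rw [hc]; rfl

theorem toMat_row_eq_iff (f : Fin d → Fin d) (i k : Fin d) :
    (toMat d f i = fun j => if j = k then (1 : ℝ) else 0) ↔ f i = k := by
  constructor
  · intro h
    simpa [toMat] using congrFun h k
  · rintro rfl
    funext j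
    simp only [toMat, eq_comm]

theorem toMat_row_eq_row_iff (f : Fin d → Fin d) (i j : Fin d) :
    toMat d f j = toMat d f i ↔ f j = f i := by
  rw [← toMat_row_eq_iff f j, (toMat_row_eq_iff f i _).2 rfl]

theorem card_sub_natCard_eq_hammingDist {ι β : Type*} [Fintype ι] [DecidableEq β] (f g : ι → β) :
    Fintype.card ι - Nat.card {i // f i = g i} = hammingDist f g := by
  rw [Nat.card_eq_fintype_card, ← Fintype.card_subtype_compl, Fintype.card_subtype, hammingDist]

theorem sub_dSelf_toMat (f : Fin d → Fin d) : d - dSelf (toMat d f) = hammingDist f id := by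
  simp only [dSelf, toMat_row_eq_iff]
  simpa using card_sub_natCard_eq_hammingDist f id

theorem exists_sub_dUnif_toMat (hd : 0 < d) (f : Fin d → Fin d) :
    ∃ k, d - dUnif (toMat d f) = hammingDist f (Function.const _ k) := by
  obtain ⟨i, -, hi⟩ := exists_mem_eq_sup univ ⟨⟨0, hd⟩, mem_univ _⟩
    fun i : Fin d => Nat.card {j : Fin d // toMat d f j = toMat d f i}
  refine ⟨f i, ?_⟩
  rw [dUnif, hi]
  simp only [toMat_row_eq_row_iff]
  simpa using card_sub_natCard_eq_hammingDist f (Function.const _ (f i))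

theorem cB_toMat_eq_or (hd : 0 < d) (f : Fin d → Fin d) :
    cB (toMat d f) = hammingDist f id ∨
      ∃ k, cB (toMat d f) = hammingDist f (Function.const _ k) + 1 := by
  obtain ⟨k, hk⟩ := exists_sub_dUnif_toMat hd f
  rw [cB, sub_dSelf_toMat, hk]
  exact (min_choice _ _).imp_right fun h => ⟨k, h⟩

/-- The row-stochastic matrix `ψ^g = ((d-2)/(d-1))·g + (1/(d(d-1)))·1 1^T` concentrated around the
map `g`; it unifies `ψ^k` (`g` constant) and `ψ^{d+1}` (`g` the identity). -/
noncomputable def psiMap (d : ℕ) (g : Fin d → Fin d) : Matrix (Fin d) (Fin d) ℝ :=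
  fun i j => ((d : ℝ) - 2) / ((d : ℝ) - 1) * toMat d g i j + 1 / ((d : ℝ) * ((d : ℝ) - 1))

theorem psiK_eq_psiMap (k : Fin d) : psiK d k = psiMap d (Function.const _ k) := by
  ext i j
  rcases eq_or_ne j k with rfl | hjk
  · simp [psiK, psiMap, toMat]
  · simp [psiK, psiMap, toMat, hjk, hjk.symm]

theorem psiSelf_eq_psiMap : psiSelf d = psiMap d id := rfl

theorem psiMap_apply_of_eq (hd : 2 ≤ d) {g : Fin d → Fin d} {i j : Fin d} (h : j = g i) :
    psiMap d g i j = 1 - 1 / d := by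
  have hd' : (2 : ℝ) ≤ d := by exact_mod_cast hd
  have hpred : (d : ℝ) - 1 ≠ 0 := by linarith
  simp only [psiMap, toMat, h, if_true]
  field_simp
  ring

theorem psiMap_apply_of_ne {g : Fin d → Fin d} {i j : Fin d} (h : j ≠ g i) :
    psiMap d g i j = 1 / ((d : ℝ) * ((d : ℝ) - 1)) := by
  simp only [psiMap, toMat, if_neg h.symm, mul_zero, zero_add]

theorem piInd_toMat (ψ : Matrix (Fin d) (Fin d) ℝ) (f : Fin d → Fin d) :
    piInd ψ (toMat d f) = ∏ i, ψ i (f i) := by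
  simp [piInd, toMat]

theorem piInd_psiMap_toMat (hd : 2 ≤ d) (f g : Fin d → Fin d) :
    piInd (psiMap d g) (toMat d f) = (1 - 1 / (d : ℝ)) ^ (d - hammingDist f g) *
      (1 / ((d : ℝ) * ((d : ℝ) - 1))) ^ hammingDist f g := by
  have hcard : #{i | f i = g i} = d - hammingDist f g := by
    have := card_filter_add_card_filter_not (s := univ) fun i => f i = g i
    rw [card_univ, Fintype.card_fin] at this
    exact Nat.eq_sub_of_add_eq this
  rw [piInd_toMat, ← prod_filter_mul_prod_filter_not univ fun i => f i = g i,
    prod_eq_pow_card fun i hi => psiMap_apply_of_eq hd (mem_filter.1 hi).2,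
    prod_eq_pow_card fun i hi => psiMap_apply_of_ne (mem_filter.1 hi).2, hcard]
  rfl

theorem one_sub_one_div_pow_mul_le_piInd (hd : 2 ≤ d) (f g : Fin d → Fin d) :
    (1 - 1 / (d : ℝ)) ^ d * (1 / (d : ℝ) ^ 2) ^ hammingDist f g ≤
      piInd (psiMap d g) (toMat d f) := by
  have hd' : (2 : ℝ) ≤ d := by exact_mod_cast hd
  have hpos : 0 ≤ 1 - 1 / (d : ℝ) := Nat.one_sub_one_div_cast_nonneg d
  have hle : 1 - 1 / (d : ℝ) ≤ 1 := Nat.one_sub_one_div_cast_le_one d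
  have hmiss : 1 / (d : ℝ) ^ 2 ≤ 1 / ((d : ℝ) * ((d : ℝ) - 1)) :=
    one_div_le_one_div_of_le (by nlinarith) (by nlinarith)
  rw [piInd_psiMap_toMat hd]
  exact mul_le_mul (pow_le_pow_of_le_one hpos hle (Nat.sub_le _ _))
    (pow_le_pow_left₀ (by positivity) hmiss _) (by positivity) (pow_nonneg hpos _)

theorem piInd_psiMap_toMat_nonneg (hd : 2 ≤ d) (f g : Fin d → Fin d) :
    0 ≤ piInd (psiMap d g) (toMat d f) := by
  have : 0 ≤ 1 - 1 / (d : ℝ) := Nat.one_sub_one_div_cast_nonneg d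
  exact le_trans (by positivity) (one_sub_one_div_pow_mul_le_piInd hd f g)

theorem one_sub_one_div_pow_mono {m n : ℕ} (hm : 0 < m) (hmn : m ≤ n) :
    (1 - 1 / (m : ℝ)) ^ m ≤ (1 - 1 / (n : ℝ)) ^ n := by
  have hm' : (1 : ℝ) ≤ m := by exact_mod_cast hm
  have hmn' : (m : ℝ) ≤ n := by exact_mod_cast hmn
  have hn_base : 0 ≤ 1 - 1 / (n : ℝ) := Nat.one_sub_one_div_cast_nonneg n
  -- Bernoulli's inequality with exponent `n / m ≥ 1`.
  have hbernoulli : 1 - 1 / (m : ℝ) ≤ (1 - 1 / (n : ℝ)) ^ ((n : ℝ) / m) :=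
    calc 1 - 1 / (m : ℝ) = 1 + n / m * -(1 / (n : ℝ)) := by
          have hn0 : (n : ℝ) ≠ 0 := by linarith
          field_simp
          ring
      _ ≤ (1 + -(1 / (n : ℝ))) ^ ((n : ℝ) / m) :=
          one_add_mul_self_le_rpow_one_add (by linarith) ((one_le_div (by linarith)).2 hmn')
      _ = (1 - 1 / (n : ℝ)) ^ ((n : ℝ) / m) := by rw [← sub_eq_add_neg]
  calc (1 - 1 / (m : ℝ)) ^ m ≤ ((1 - 1 / (n : ℝ)) ^ ((n : ℝ) / m)) ^ m :=
        pow_le_pow_left₀ (Nat.one_sub_one_div_cast_nonneg m) hbernoulli m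
    _ = (1 - 1 / (n : ℝ)) ^ n := by
        rw [← Real.rpow_mul_natCast hn_base, div_mul_cancel₀ _ (by linarith),
          Real.rpow_natCast]

theorem exp_neg_two_le : Real.exp (-2) ≤ 4 / 27 := by
  have hexp : (27 / 4 : ℝ) ≤ Real.exp 2 := by
    have := Real.exp_one_gt_d9
    calc (27 / 4 : ℝ) ≤ Real.exp 1 ^ 2 := by nlinarith
      _ = Real.exp 2 := by rw [← Real.exp_nat_mul]; norm_num
  rw [Real.exp_neg, inv_le_comm₀ (Real.exp_pos 2) (by norm_num)]
  linarith

theorem two_mul_exp_neg_two_le (hd : 3 ≤ d) : 2 * Real.exp (-2) ≤ (1 - 1 / (d : ℝ)) ^ d :=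
  calc 2 * Real.exp (-2) ≤ (1 - 1 / ((3 : ℕ) : ℝ)) ^ 3 := by norm_num; linarith [exp_neg_two_le]
    _ ≤ (1 - 1 / (d : ℝ)) ^ d := one_sub_one_div_pow_mono three_pos hd

theorem two_mul_exp_neg_two_mul_le_piInd (hd : 3 ≤ d) (f g : Fin d → Fin d) :
    2 * Real.exp (-2) * (1 / (d : ℝ) ^ 2) ^ hammingDist f g ≤ piInd (psiMap d g) (toMat d f) :=
  (mul_le_mul_of_nonneg_right (two_mul_exp_neg_two_le hd) (by positivity)).trans
    (one_sub_one_div_pow_mul_le_piInd (by lia) f g)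

theorem half_mul_piInd_id_le_priorPi (hd : 2 ≤ d) (f : Fin d → Fin d) :
    1 / 2 * piInd (psiMap d id) (toMat d f) ≤ priorPi d (toMat d f) := by
  simp only [priorPi, psiK_eq_psiMap, psiSelf_eq_psiMap]
  exact le_add_of_nonneg_left <| mul_nonneg (by positivity) <|
    sum_nonneg fun _ _ => piInd_psiMap_toMat_nonneg hd f _

theorem one_div_mul_piInd_const_le_priorPi (hd : 2 ≤ d) (f : Fin d → Fin d) (k : Fin d) :
    1 / (2 * d) * piInd (psiMap d (Function.const _ k)) (toMat d f) ≤ priorPi d (toMat d f) := by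
  simp only [priorPi, psiK_eq_psiMap, psiSelf_eq_psiMap]
  have hsum := single_le_sum (f := fun k => piInd (psiMap d (Function.const _ k)) (toMat d f))
    (fun _ _ => piInd_psiMap_toMat_nonneg hd f _) (mem_univ k)
  have hself := piInd_psiMap_toMat_nonneg hd f id
  exact (mul_le_mul_of_nonneg_left hsum (by positivity)).trans
    (le_add_of_nonneg_right (by positivity))

theorem priorPi_two_toMat (f : Fin 2 → Fin 2) : priorPi 2 (toMat 2 f) = 1 / 4 := by
  simp only [priorPi, piInd_toMat, psiK, psiSelf]
  norm_num

theorem exp_neg_two_mul_pow_le_priorPi_of_three_le (hd : 3 ≤ d) (f : Fin d → Fin d) :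
    Real.exp (-2) * (1 / (d : ℝ) ^ 2) ^ cB (toMat d f) ≤ priorPi d (toMat d f) := by
  have hd' : (3 : ℝ) ≤ d := by exact_mod_cast hd
  obtain hc | ⟨k, hc⟩ := cB_toMat_eq_or (by lia) f
  · have hweight := two_mul_exp_neg_two_mul_le_piInd hd f id
    rw [hc]
    exact le_trans (by linarith) (half_mul_piInd_id_le_priorPi (by lia) f)
  · set m := hammingDist f (Function.const _ k)
    have hsq : 1 / (d : ℝ) ^ 2 ≤ 1 / d := one_div_le_one_div_of_le (by linarith) (by nlinarith)
    rw [hc]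
    calc Real.exp (-2) * (1 / (d : ℝ) ^ 2) ^ (m + 1)
        = Real.exp (-2) * (1 / (d : ℝ) ^ 2) ^ m * (1 / (d : ℝ) ^ 2) := by ring
      _ ≤ Real.exp (-2) * (1 / (d : ℝ) ^ 2) ^ m * (1 / d) := by gcongr
      _ = 1 / (2 * d) * (2 * Real.exp (-2) * (1 / (d : ℝ) ^ 2) ^ m) := by field_simp
      _ ≤ 1 / (2 * d) * piInd (psiMap d (Function.const _ k)) (toMat d f) := by
          gcongr
          exact two_mul_exp_neg_two_mul_le_piInd hd f _
      _ ≤ priorPi d (toMat d f) := one_div_mul_piInd_const_le_priorPi (by lia) f k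

theorem exp_neg_two_mul_pow_le_priorPi (hd : 2 ≤ d) (f : Fin d → Fin d) :
    Real.exp (-2) * (1 / (d : ℝ) ^ 2) ^ cB (toMat d f) ≤ priorPi d (toMat d f) := by
  obtain rfl | hd3 := hd.eq_or_lt
  · have hpow : (1 / ((2 : ℕ) : ℝ) ^ 2) ^ cB (toMat 2 f) ≤ 1 :=
      pow_le_one₀ (by positivity) (by norm_num)
    rw [priorPi_two_toMat]
    linarith [mul_le_of_le_one_right (Real.exp_pos (-2)).le hpow, exp_neg_two_le]
  · exact exp_neg_two_mul_pow_le_priorPi_of_three_le hd3 f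

theorem log_one_div_priorPi_le (hd : 2 ≤ d) (f : Fin d → Fin d) :
    Real.log (1 / priorPi d (toMat d f)) ≤ 2 * cB (toMat d f) * Real.log d + 2 := by
  have : (0 : ℝ) < d := by exact_mod_cast two_pos.trans_le hd
  have hlog := Real.log_le_log (by positivity) (exp_neg_two_mul_pow_le_priorPi hd f)
  rw [Real.log_mul (by positivity) (by positivity), Real.log_exp, Real.log_pow, one_div,
    Real.log_inv, Real.log_pow] at hlog
  rw [one_div, Real.log_inv]
  push_cast at hlog
  linarith

/-- The regret `Reg(φ) = Σ_{t=1}^T ⟨p_t − φ^T p_t, ℓ_t⟩` against the transformation `φ`. -/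
def regret (T : ℕ) (p ℓ : ℕ → Fin d → ℝ) (φ : Matrix (Fin d) (Fin d) ℝ) : ℝ :=
  ∑ t ∈ Icc 1 T, ∑ i, (p t i - ∑ j, φ j i * p t j) * ℓ t i

theorem convexOn_regret (T : ℕ) (p ℓ : ℕ → Fin d → ℝ) {s : Set (Matrix (Fin d) (Fin d) ℝ)}
    (hs : Convex ℝ s) : ConvexOn ℝ s (regret T p ℓ) := by
  refine ⟨hs, fun φ _ χ _ a b _ _ hab => le_of_eq ?_⟩
  have hmix (t : ℕ) (i : Fin d) : ∑ j, (a • φ + b • χ) j i * p t j =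
      a * ∑ j, φ j i * p t j + b * ∑ j, χ j i * p t j := by
    simp only [Matrix.add_apply, Matrix.smul_apply, smul_eq_mul, add_mul, sum_add_distrib, mul_sum,
      mul_assoc]
  simp only [regret, smul_eq_mul, mul_sum (Icc 1 T), mul_sum univ (fun _ => (_ - _) * _),
    ← sum_add_distrib, hmix]
  refine sum_congr rfl fun t _ => sum_congr rfl fun i _ => ?_
  linear_combination -(p t i * ℓ t i) * hab

theorem concaveOn_sqrt_mul_add {a b : ℝ} (ha : 0 ≤ a) (hb : 0 ≤ b) :
    ConcaveOn ℝ (Set.Ici 0) fun x => √(a * x + b) := by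
  have hcomp := Real.strictConcaveOn_sqrt.concaveOn.comp_affineMap
    (a • AffineMap.id ℝ ℝ + AffineMap.const ℝ ℝ b)
  exact hcomp.subset (fun x (hx : 0 ≤ x) => add_nonneg (mul_nonneg ha hx) hb) (convex_Ici 0)

theorem stmt5_general (hd : 2 ≤ d) {R : Matrix (Fin d) (Fin d) ℝ → ℝ}
    (hR : ConvexOn ℝ (Matrix.rowStochastic ℝ (Fin d)) R) {C B τ : ℝ} (hC : 0 ≤ C) (hτ : 0 ≤ τ)
    (hbound : ∀ φ ∈ PhiB d, R φ ≤ C * √(τ * Real.log (1 / priorPi d φ)) + B)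
    {φ : Matrix (Fin d) (Fin d) ℝ} (hφ : RowStochastic φ) :
    R φ ≤ C * √(τ * (2 * cGen d φ * Real.log d + 2)) + B := by
  have : 0 ≤ Real.log d := Real.log_natCast_nonneg d
  have hsqrt : ConcaveOn ℝ (Set.Ici 0) fun x => √(τ * (2 * x * Real.log d + 2)) := by
    convert concaveOn_sqrt_mul_add (a := 2 * τ * Real.log d) (b := 2 * τ) (by positivity)
      (by positivity) using 3
    ring
  refine map_le_map_cGen hR ((hsqrt.smul hC).add_const B) (fun f => ?_) hφ
  calc R (toMat d f) ≤ C * √(τ * Real.log (1 / priorPi d (toMat d f))) + B :=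
        hbound _ (mem_image_of_mem _ (mem_univ f))
    _ ≤ C * √(τ * (2 * cB (toMat d f) * Real.log d + 2)) + B := by
        gcongr
        exact log_one_div_priorPi_le hd f

/-- Fix `d ≥ 2`, `T ≥ 1`, sequences `p_t ∈ Δ(d)`, `ℓ_t ∈ [0,1]^d`, and
`Reg(φ) = Σ_t ⟨p_t − φ^T p_t, ℓ_t⟩`.  If there are constants `C, B ≥ 0` with
`Reg(φ) ≤ C √(T log(1/π(φ))) + B` for every `φ ∈ Φ_b`, then for every row-stochastic `φ`,
`Reg(φ) ≤ C √(T (2 c_φ log d + 2)) + B`. -/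
theorem stmt5 (d T : ℕ) (hd : 2 ≤ d) (hT : 1 ≤ T)
    (p ℓ : ℕ → Fin d → ℝ)
    (hp : ∀ t ∈ Finset.Icc 1 T, InSimplex d (p t))
    (hℓ : ∀ t ∈ Finset.Icc 1 T, ∀ i, 0 ≤ ℓ t i ∧ ℓ t i ≤ 1)
    (C B : ℝ) (hC : 0 ≤ C) (hB : 0 ≤ B)
    (hbound : ∀ φ ∈ PhiB d,
      (∑ t ∈ Finset.Icc 1 T, ∑ i, (p t i - ∑ j, φ j i * p t j) * ℓ t i) ≤
        C * Real.sqrt ((T : ℝ) * Real.log (1 / priorPi d φ)) + B) :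
    ∀ φ : Matrix (Fin d) (Fin d) ℝ, RowStochastic φ →
      (∑ t ∈ Finset.Icc 1 T, ∑ i, (p t i - ∑ j, φ j i * p t j) * ℓ t i) ≤
        C * Real.sqrt ((T : ℝ) * (2 * cGen d φ * Real.log d + 2)) + B :=
  fun _ hφ => stmt5_general hd (convexOn_regret T p ℓ Matrix.convex_rowStochastic) hC
    T.cast_nonneg hbound hφ
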